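/- arXiv:2108.04102 — 2 statements merged into one kernel-verified Lean document; each statement's English description precedes it below -/
import Mathlib

section
/- Tail bound for k-wise ε-approximately independent random variables: Let n ≥ 1 be an integer, k ≥ 4 an even integer, ε ≥ 0 a real and p ∈ [0,1]. Suppose X_1,…,X_n are {0,1}-valued random variables with identical marginal distributions that are k-wise ε-approximately independent for the product distribution D(n,p). Let X = X_1 + … + X_n and μ = E[X]. Then for every real t > 0, Pr[|X − μ| ≥ t] ≤ 8·((k·μ + k²)/t²)^{k/2} + ε·(n/t)^k. -/
open MeasureTheory

/-- `X_1, …, X_n` (0-1 valued random variables) are `k`-wise `ε`-approximately independent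
for the product distribution `D(n,p)`: for every `t ≤ k`, all distinct indices
`i_1, …, i_t` and all bits `b_1, …, b_t ∈ {0,1}`,
`|Pr[X_{i_j} = b_j, 1 ≤ j ≤ t] − ∏_j p^{b_j}(1-p)^{1-b_j}| ≤ ε`. -/
def KWiseApproxIndep {Ω : Type*} [MeasureSpace Ω] (n : ℕ) (X : Fin n → Ω → ℝ)
    (k : ℕ) (ε p : ℝ) : Prop :=
  ∀ t : ℕ, t ≤ k → ∀ idx : Fin t → Fin n, Function.Injective idx →
    ∀ b : Fin t → Bool,
      |(volume {ω | ∀ j, X (idx j) ω = (if b j then 1 else 0)}).toReal -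
        ∏ j, (if b j then p else 1 - p)| ≤ ε

/-- The bit of a Boolean as a real number. -/
noncomputable def bitR (b : Bool) : ℝ := if b then 1 else 0

lemma sum_prod_bool {s : ℕ} (ψ : Fin s → Bool → ℝ) :
    ∑ b : Fin s → Bool, ∏ j, ψ j (b j) = ∏ j, (ψ j true + ψ j false) := by
  have h := Finset.prod_univ_sum (fun _ : Fin s => (Finset.univ : Finset Bool)) ψ
  rw [Fintype.piFinset_univ] at h
  rw [← h]
  simp

lemma expect_bool {Ω : Type*} [MeasureSpace Ω] [IsProbabilityMeasure (volume : Measure Ω)]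
    {n s : ℕ} (X : Fin n → Ω → ℝ) (hmeas : ∀ i, Measurable (X i))
    (h01 : ∀ i ω, X i ω = 0 ∨ X i ω = 1) (idx : Fin s → Fin n) (F : (Fin s → ℝ) → ℝ) :
    ∫ ω, F (fun j => X (idx j) ω) =
      ∑ b : Fin s → Bool, (volume {ω | ∀ j, X (idx j) ω = (if b j then 1 else 0)}).toReal *
        F (fun j => bitR (b j)) := by
  have hms : ∀ b : Fin s → Bool,
      MeasurableSet {ω | ∀ j, X (idx j) ω = (if b j then (1:ℝ) else 0)} := by
    intro b
    rw [Set.ofPred_forall]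
    exact MeasurableSet.iInter fun j => hmeas (idx j) (measurableSet_singleton _)
  have key : ∀ ω, F (fun j => X (idx j) ω) = ∑ b : Fin s → Bool,
      Set.indicator {ω | ∀ j, X (idx j) ω = (if b j then (1:ℝ) else 0)}
        (fun _ => F (fun j => bitR (b j))) ω := by
    intro ω
    rw [Finset.sum_eq_single (fun j => decide (X (idx j) ω = 1))]
    · rw [Set.indicator_of_mem]
      · congr 1
        funext j
        rcases h01 (idx j) ω with h | h <;> simp [bitR, h]
      · intro j
        rcases h01 (idx j) ω with h | h <;> simp [h]
    · intro b _ hb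
      rw [Set.indicator_of_notMem]
      intro hmem
      apply hb
      funext j
      have := hmem j
      cases hbj : b j <;> simp [hbj] at this ⊢ <;> simp [this]
    · simp
  simp_rw [key]
  rw [integral_finsetSum]
  · refine Finset.sum_congr rfl fun b _ => ?_
    rw [integral_indicator_const _ (hms b)]
    simp [Measure.real]
  · intro b _
    exact (integrable_const _).indicator (hms b)

lemma approx_bool {Ω : Type*} [MeasureSpace Ω] [IsProbabilityMeasure (volume : Measure Ω)]
    {n k s : ℕ} {ε p : ℝ} (X : Fin n → Ω → ℝ) (hmeas : ∀ i, Measurable (X i))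
    (h01 : ∀ i ω, X i ω = 0 ∨ X i ω = 1) (happrox : KWiseApproxIndep n X k ε p)
    (hs : s ≤ k) (idx : Fin s → Fin n) (hidx : Function.Injective idx) (F : (Fin s → ℝ) → ℝ) :
    ∫ ω, F (fun j => X (idx j) ω) ≤
      ∑ b : Fin s → Bool, (∏ j, (if b j then p else 1 - p)) * F (fun j => bitR (b j)) +
      ε * ∑ b : Fin s → Bool, |F (fun j => bitR (b j))| := by
  rw [expect_bool X hmeas h01, Finset.mul_sum, ← Finset.sum_add_distrib]
  refine Finset.sum_le_sum fun b _ => ?_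
  have h := happrox s hs idx hidx b
  have h2 := mul_le_mul_of_nonneg_right h (abs_nonneg (F (fun j => bitR (b j))))
  rw [← abs_mul] at h2
  have h3 := (le_abs_self _).trans h2
  linarith

lemma approx_prod {Ω : Type*} [MeasureSpace Ω] [IsProbabilityMeasure (volume : Measure Ω)]
    {n k s : ℕ} {ε p q : ℝ} (X : Fin n → Ω → ℝ) (hmeas : ∀ i, Measurable (X i))
    (h01 : ∀ i ω, X i ω = 0 ∨ X i ω = 1) (happrox : KWiseApproxIndep n X k ε p)
    (hs : s ≤ k) (idx : Fin s → Fin n) (hidx : Function.Injective idx) (M : Fin s → ℕ) :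
    ∫ ω, ∏ j, (X (idx j) ω - q) ^ M j ≤
      ∏ j, (p * (1 - q) ^ M j + (1 - p) * (-q) ^ M j) +
      ε * ∏ j, (|1 - q| ^ M j + |q| ^ M j) := by
  have h := approx_bool X hmeas h01 happrox hs idx hidx (fun x => ∏ j, (x j - q) ^ M j)
  refine h.trans (le_of_eq ?_)
  congr 1
  · have := sum_prod_bool (fun (j : Fin s) b => (if b then p else 1 - p) * (bitR b - q) ^ M j)
    simp only [Finset.prod_mul_distrib] at this
    rw [this]
    simp [bitR]
  · congr 1
    have := sum_prod_bool (fun (j : Fin s) b => |bitR b - q| ^ M j)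
    simp only [Finset.abs_prod, abs_pow]
    rw [this]
    simp [bitR]

/-- All indices distinct: expectation at most `ε`. -/
lemma distinct_case {Ω : Type*} [MeasureSpace Ω] [IsProbabilityMeasure (volume : Measure Ω)]
    {n k s : ℕ} {ε p q : ℝ} (X : Fin n → Ω → ℝ) (hmeas : ∀ i, Measurable (X i))
    (h01 : ∀ i ω, X i ω = 0 ∨ X i ω = 1) (happrox : KWiseApproxIndep n X k ε p)
    (hq : ∀ i, ∫ ω, X i ω = q) (hint : ∀ i, Integrable (X i))
    (hq0 : 0 ≤ q) (hq1 : q ≤ 1) (hd1 : |p - q| ≤ q) (hd2 : |p - q| ≤ 1 - q)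
    (hs : s + 2 ≤ k) (idx : Fin (s + 2) → Fin n) (hidx : Function.Injective idx) :
    ∫ ω, ∏ j, (X (idx j) ω - q) ≤ ε := by
  set c : ℝ := (p - q) ^ (s + 1) with hc
  have h := approx_bool X hmeas h01 happrox hs idx hidx
    (fun x => ∏ j, (x j - q) - c * (x 0 - q))
  have hI : Integrable (fun ω => ∏ j, (X (idx j) ω - q)) := by
    refine Integrable.of_bound (C := 1) ?_ ?_
    · exact (Finset.measurable_fun_prod _ fun j _ =>
        (hmeas (idx j)).sub_const q).aestronglyMeasurable
    · refine Filter.Eventually.of_forall fun ω => ?_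
      rw [Real.norm_eq_abs, Finset.abs_prod]
      refine Finset.prod_le_one (fun _ _ => abs_nonneg _) fun j _ => ?_
      rw [abs_le]
      rcases h01 (idx j) ω with h | h <;> rw [h] <;> constructor <;> linarith
  have e1 : ∫ ω, (∏ j, (X (idx j) ω - q) - c * (X (idx 0) ω - q)) =
      ∫ ω, ∏ j, (X (idx j) ω - q) := by
    have hI2 : Integrable (fun ω => X (idx 0) ω - q) := (hint _).sub (integrable_const _)
    rw [integral_sub hI (hI2.const_mul c), integral_const_mul,
      integral_sub (hint _) (integrable_const _), hq]
    simp
  simp only at h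
  rw [e1] at h
  refine h.trans ?_
  have hπ : ∑ b : Fin (s+2) → Bool, (∏ j, (if b j then p else 1 - p)) *
      (∏ j, (bitR (b j) - q) - c * (bitR (b 0) - q)) = 0 := by
    have a1 := sum_prod_bool (fun (j : Fin (s+2)) b => (if b then p else 1 - p) * (bitR b - q))
    have a2 := sum_prod_bool (fun (j : Fin (s+2)) b =>
      (if b then p else 1 - p) * (if j = 0 then bitR b - q else 1))
    simp only [Finset.prod_mul_distrib, Finset.prod_ite_eq', Finset.mem_univ, if_true] at a1 a2
    have a3 : ∀ b : Fin (s+2) → Bool, (∏ j, (if b j then p else 1 - p)) *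
      (∏ j, (bitR (b j) - q) - c * (bitR (b 0) - q)) =
      (∏ j, (if b j then p else 1 - p)) * (∏ j, (bitR (b j) - q)) -
      c * ((∏ j, (if b j then p else 1 - p)) * (bitR (b 0) - q)) := by
      intro b; ring
    rw [Finset.sum_congr rfl fun b _ => a3 b, Finset.sum_sub_distrib, ← Finset.mul_sum, a1, a2,
      Finset.prod_const, Fin.prod_univ_succ (n := s + 1)]
    simp only [Fin.succ_ne_zero, if_true, if_false, bitR, Finset.card_univ, Fintype.card_fin,
      Bool.false_eq_true, mul_one, add_sub_cancel, Finset.prod_const_one]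
    rw [hc]; ring
  rw [hπ, zero_add]
  have habs : ∑ b : Fin (s+2) → Bool, |∏ j, (bitR (b j) - q) - c * (bitR (b 0) - q)| = 1 := by
    have hcle : ∀ b : Fin (s+2) → Bool, |c| ≤ ∏ j : Fin (s+1), |bitR (b j.succ) - q| := by
      intro b
      rw [hc, abs_pow]
      have : |p - q| ^ (s+1) = ∏ _j : Fin (s+1), |p - q| := by simp
      rw [this]
      refine Finset.prod_le_prod (fun _ _ => abs_nonneg _) fun j _ => ?_
      cases b j.succ
      · simpa [bitR, abs_of_nonneg hq0] using hd1
      · simpa [bitR, abs_of_nonneg (sub_nonneg.2 hq1)] using hd2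
    have hsg : ∀ x : Bool, bitR x - q = (if x then 1 else -1) * |bitR x - q| := by
      intro x
      cases x
      · simp [bitR, abs_of_nonneg hq0]
      · simp [bitR, abs_of_nonneg (sub_nonneg.2 hq1)]
    have hpt : ∀ b : Fin (s+2) → Bool, |∏ j, (bitR (b j) - q) - c * (bitR (b 0) - q)| =
        ∏ j, |bitR (b j) - q| -
        c * (∏ j, (if j = 0 then |bitR (b j) - q| else if b j then (1:ℝ) else -1)) := by
      intro b
      rw [Fin.prod_univ_succ, Fin.prod_univ_succ (n := s+1), Fin.prod_univ_succ (n := s+1)]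
      simp only [Fin.succ_ne_zero, if_true, if_false]
      have e : (bitR (b 0) - q) * ∏ i : Fin (s+1), (bitR (b i.succ) - q) - c * (bitR (b 0) - q) =
        (bitR (b 0) - q) * (∏ i : Fin (s+1), (bitR (b i.succ) - q) - c) := by ring
      have e2 : ∏ i : Fin (s+1), (bitR (b i.succ) - q) =
          (∏ i : Fin (s+1), if b i.succ then (1:ℝ) else -1) *
          ∏ i : Fin (s+1), |bitR (b i.succ) - q| := by
        rw [← Finset.prod_mul_distrib]
        exact Finset.prod_congr rfl fun i _ => hsg _
      have hσ : (∏ i : Fin (s+1), if b i.succ then (1:ℝ) else -1) = 1 ∨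
          (∏ i : Fin (s+1), if b i.succ then (1:ℝ) else -1) = -1 := by
        rw [← sq_eq_one_iff, ← Finset.prod_pow]
        exact Finset.prod_eq_one fun i _ => by split_ifs <;> norm_num
      rw [e, e2, abs_mul]
      have h1 := hcle b
      have h2 := abs_le.1 h1
      rcases hσ with hσ | hσ <;> rw [hσ]
      · rw [abs_of_nonneg (a := 1 * _ - c) (by linarith)]; ring
      · rw [abs_of_nonpos (a := -1 * _ - c) (by linarith)]; ring
    rw [Finset.sum_congr rfl fun b _ => hpt b, Finset.sum_sub_distrib, ← Finset.mul_sum]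
    have a1 := sum_prod_bool (fun (j : Fin (s+2)) b => |bitR b - q|)
    have a2 := sum_prod_bool (fun (j : Fin (s+2)) b =>
      if j = 0 then |bitR b - q| else if b then (1:ℝ) else -1)
    simp only at a1 a2
    rw [a1, a2, Fin.prod_univ_succ (n := s + 1), Fin.prod_univ_succ (n := s + 1)]
    simp [bitR, Fin.succ_ne_zero, abs_of_nonneg hq0, abs_of_nonneg (sub_nonneg.2 hq1)]
  rw [habs, mul_one]

/-- Weight of a multiplicity. -/
noncomputable def gV (v : ℝ) (m : ℕ) : ℝ := if m = 0 then 1 else if m = 1 then 0 else v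

lemma pow_gap (v ε : ℝ) (hv : 0 ≤ v) (hv4 : v ≤ 1/4) (hε : 0 ≤ ε) (hεv : ε ≤ v) (s : ℕ) :
    (v + ε) ^ (s + 2) ≤ v ^ (s + 2) + 3 * v * ε := by
  induction s with
  | zero =>
    have : ε * ε ≤ v * ε := mul_le_mul_of_nonneg_right hεv hε
    norm_num
    nlinarith
  | succ s ih =>
    have h1 : (v + ε) ^ (s + 1 + 2) ≤ (v ^ (s + 2) + 3 * v * ε) * (v + ε) := by
      rw [pow_succ]
      exact mul_le_mul_of_nonneg_right ih (by linarith)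
    have h2 : v ^ (s + 2) ≤ v * (1/4) := by
      have : v ^ (s + 1) ≤ 1/4 := by
        calc v ^ (s+1) ≤ v ^ 1 := pow_le_pow_of_le_one hv (by linarith) (by omega)
          _ ≤ 1/4 := by simpa using hv4
      calc v ^ (s+2) = v * v ^ (s+1) := by ring
        _ ≤ _ := mul_le_mul_of_nonneg_left this hv
    have h3 : v ^ (s + 2) * ε ≤ v * (1/4) * ε := mul_le_mul_of_nonneg_right h2 hε
    have h4 : v * ε * (v + ε) ≤ v * ε * (1/2) :=
      mul_le_mul_of_nonneg_left (by linarith) (mul_nonneg hv hε)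
    have h5 : v ^ (s + 1 + 2) = v ^ (s+2) * v := by ring
    have h6 : 0 ≤ v * ε := mul_nonneg hv hε
    rw [h5]
    nlinarith

lemma prod_le_single {s : ℕ} (f : Fin s → ℝ) (h0 : ∀ i, 0 ≤ f i) (h1 : ∀ i, f i ≤ 1) (a : Fin s) :
    ∏ i, f i ≤ f a := by
  rw [← Finset.mul_prod_erase _ f (Finset.mem_univ a)]
  exact mul_le_of_le_one_right (h0 a) (Finset.prod_le_one (fun i _ => h0 i) fun i _ => h1 i)

lemma prod_le_double {s : ℕ} (f : Fin s → ℝ) (h0 : ∀ i, 0 ≤ f i) (h1 : ∀ i, f i ≤ 1)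
    (a b : Fin s) (hab : b ≠ a) : ∏ i, f i ≤ f a * f b := by
  rw [← Finset.mul_prod_erase _ f (Finset.mem_univ a),
    ← Finset.mul_prod_erase _ f (Finset.mem_erase.2 ⟨hab, Finset.mem_univ b⟩)]
  exact mul_le_mul_of_nonneg_left (mul_le_of_le_one_right (h0 b)
    (Finset.prod_le_one (fun i _ => h0 i) fun i _ => h1 i)) (h0 a)

lemma tuple_case {Ω : Type*} [MeasureSpace Ω] [IsProbabilityMeasure (volume : Measure Ω)]
    {n k s : ℕ} {ε p q : ℝ} (X : Fin n → Ω → ℝ) (hmeas : ∀ i, Measurable (X i))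
    (h01 : ∀ i ω, X i ω = 0 ∨ X i ω = 1) (happrox : KWiseApproxIndep n X k ε p)
    (hp0 : 0 ≤ p) (hp1 : p ≤ 1)
    (hq : ∀ i, ∫ ω, X i ω = q) (hint : ∀ i, Integrable (X i))
    (hq0 : 0 ≤ q) (hq1 : q ≤ 1) (hε : 0 ≤ ε) (hd : |p - q| ≤ ε) (hεv : ε ≤ q * (1 - q))
    (hmom : ∀ i (m : ℕ), 2 ≤ m → ∫ ω, (X i ω - q) ^ m ≤ q * (1 - q))
    (hs : s ≤ k) (idx : Fin s → Fin n) (hidx : Function.Injective idx)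
    (M : Fin s → ℕ) (hM : ∀ j, 1 ≤ M j) (hM2 : 2 ≤ ∑ j, M j) :
    ∫ ω, ∏ j, (X (idx j) ω - q) ^ M j ≤ ε + ∏ j, gV (q * (1 - q)) (M j) := by
  set v : ℝ := q * (1 - q) with hv
  have hv0 : 0 ≤ v := mul_nonneg hq0 (by linarith)
  have hv4 : v ≤ 1/4 := by nlinarith [sq_nonneg (q - 1/2)]
  have hg0 : ∀ m, 0 ≤ gV v m := by
    intro m; unfold gV; split_ifs <;> linarith
  have hG0 : 0 ≤ ∏ j, gV v (M j) := Finset.prod_nonneg fun j _ => hg0 _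
  have hda := abs_le.1 hd
  -- pointwise bounds
  have hw0 : ∀ j, 0 ≤ |1 - q| ^ M j + |q| ^ M j := fun j => by positivity
  have hw2 : ∀ j, 2 ≤ M j → |1 - q| ^ M j + |q| ^ M j ≤ 1 - 2 * v := by
    intro j hj
    rw [abs_of_nonneg hq0, abs_of_nonneg (sub_nonneg.2 hq1)]
    have a1 : (1 - q) ^ M j ≤ (1 - q) ^ 2 :=
      pow_le_pow_of_le_one (by linarith) (by linarith) hj
    have a2 : q ^ M j ≤ q ^ 2 := pow_le_pow_of_le_one hq0 hq1 hj
    rw [hv]; nlinarith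
  have hw1 : ∀ j, |1 - q| ^ M j + |q| ^ M j ≤ 1 := by
    intro j
    rcases Nat.lt_or_ge (M j) 2 with h | h
    · have : M j = 1 := by have := hM j; omega
      rw [this, abs_of_nonneg hq0, abs_of_nonneg (sub_nonneg.2 hq1)]
      linarith
    · linarith [hw2 j h]
  have hh1 : ∀ j, M j = 1 → |p * (1 - q) ^ M j + (1 - p) * (-q) ^ M j| ≤ ε := by
    intro j hj
    rw [hj]
    convert hd using 2
    ring
  have hh2 : ∀ j, 2 ≤ M j → |p * (1 - q) ^ M j + (1 - p) * (-q) ^ M j| ≤ v + ε := by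
    intro j hj
    have a1 : (1 - q) ^ M j ≤ (1 - q) ^ 2 :=
      pow_le_pow_of_le_one (by linarith) (by linarith) hj
    have a2 : q ^ M j ≤ q ^ 2 := pow_le_pow_of_le_one hq0 hq1 hj
    have a3 : |p * (1 - q) ^ M j + (1 - p) * (-q) ^ M j| ≤
        p * (1 - q) ^ M j + (1 - p) * q ^ M j := by
      refine (abs_add_le _ _).trans (le_of_eq ?_)
      rw [abs_mul, abs_mul, abs_pow, abs_pow, abs_neg, abs_of_nonneg hp0, abs_of_nonneg hq0,
        abs_of_nonneg (sub_nonneg.2 hq1), abs_of_nonneg (sub_nonneg.2 hp1)]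
    have a4 := mul_le_mul_of_nonneg_left a1 hp0
    have a5 := mul_le_mul_of_nonneg_left a2 (sub_nonneg.2 hp1)
    have a6 : p * (1 - q) ^ 2 + (1 - p) * q ^ 2 = v + (p - q) * (1 - 2 * q) := by rw [hv]; ring
    have a7 : (p - q) * (1 - 2 * q) ≤ ε := by
      calc (p - q) * (1 - 2 * q) ≤ |(p - q) * (1 - 2 * q)| := le_abs_self _
        _ = |p - q| * |1 - 2 * q| := abs_mul _ _
        _ ≤ ε * 1 := mul_le_mul hd (abs_le.2 ⟨by linarith, by linarith⟩) (abs_nonneg _) hε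
        _ = ε := mul_one _
    linarith
  have hhle : ∀ j, |p * (1 - q) ^ M j + (1 - p) * (-q) ^ M j| ≤ 1 := by
    intro j
    rcases Nat.lt_or_ge (M j) 2 with h | h
    · have := hh1 j (by have := hM j; omega)
      linarith
    · linarith [hh2 j h]
  have hmain := approx_prod (q := q) X hmeas h01 happrox hs idx hidx M
  have hmain2 : ∏ j, (p * (1 - q) ^ M j + (1 - p) * (-q) ^ M j) ≤
      ∏ j, |p * (1 - q) ^ M j + (1 - p) * (-q) ^ M j| := by
    rw [← Finset.abs_prod]; exact le_abs_self _
  by_cases hall1 : ∀ j, M j = 1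
  · -- all distinct
    have hs2 : 2 ≤ s := by simpa [hall1] using hM2
    obtain ⟨s', rfl⟩ : ∃ s', s = s' + 2 := ⟨s - 2, by omega⟩
    have := distinct_case X hmeas h01 happrox hq hint hq0 hq1 (by nlinarith) (by nlinarith) hs
      idx hidx
    simp only [hall1, pow_one] at hG0 ⊢
    linarith
  push Not at hall1
  obtain ⟨a, ha⟩ := hall1
  have ha2 : 2 ≤ M a := by have := hM a; omega
  by_cases hex : ∃ b, M b = 1
  · obtain ⟨b, hb⟩ := hex
    have hab : b ≠ a := by rintro rfl; exact ha hb
    have b1 := prod_le_double _ (fun j => abs_nonneg _) hhle a b hab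
    have b2 : ∏ j, (|1 - q| ^ M j + |q| ^ M j) ≤ 1 - 2 * v :=
      (prod_le_single _ hw0 hw1 a).trans (hw2 a ha2)
    have b3 := mul_le_mul (hh2 a ha2) (hh1 b hb) (abs_nonneg _) (by linarith)
    have b4 := mul_le_mul_of_nonneg_left b2 hε
    nlinarith
  · push Not at hex
    have hge : ∀ j, 2 ≤ M j := fun j => by have := hM j; have := hex j; omega
    have hG : ∏ j, gV v (M j) = v ^ s := by
      have : ∀ j, gV v (M j) = v := by
        intro j
        have := hge j
        unfold gV
        rw [if_neg (by omega), if_neg (by omega)]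
      simp [this]
    rcases Nat.lt_or_ge s 2 with h | h
    · have hs1 : s = 1 := by have := a.2; omega
      subst hs1
      rw [hG]
      simp only [Fin.prod_univ_one, pow_one]
      linarith [hmom (idx 0) (M 0) (hge 0)]
    · obtain ⟨s', rfl⟩ : ∃ s', s = s' + 2 := ⟨s - 2, by omega⟩
      rw [hG]
      have b1 : ∏ j, |p * (1 - q) ^ M j + (1 - p) * (-q) ^ M j| ≤ (v + ε) ^ (s' + 2) := by
        calc _ ≤ ∏ _j : Fin (s' + 2), (v + ε) :=
              Finset.prod_le_prod (fun _ _ => abs_nonneg _) fun j _ => hh2 j (hge j)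
          _ = _ := by simp
      have b2 : ∏ j, (|1 - q| ^ M j + |q| ^ M j) ≤ (1 - 2 * v) * (1 - 2 * v) := by
        refine (prod_le_double _ hw0 hw1 0 1 (by simp)).trans ?_
        exact mul_le_mul (hw2 _ (hge _)) (hw2 _ (hge _)) (hw0 _) (by linarith)
      have b3 := pow_gap v ε hv0 hv4 hε hεv s'
      have b4 := mul_le_mul_of_nonneg_left b2 hε
      have b5 : 0 ≤ ε * v := mul_nonneg hε hv0
      nlinarith

lemma multi_case {Ω : Type*} [MeasureSpace Ω] [IsProbabilityMeasure (volume : Measure Ω)]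
    {n k : ℕ} {ε p q : ℝ} (hk : 2 ≤ k) (X : Fin n → Ω → ℝ) (hmeas : ∀ i, Measurable (X i))
    (h01 : ∀ i ω, X i ω = 0 ∨ X i ω = 1) (happrox : KWiseApproxIndep n X k ε p)
    (hp0 : 0 ≤ p) (hp1 : p ≤ 1)
    (hq : ∀ i, ∫ ω, X i ω = q) (hint : ∀ i, Integrable (X i))
    (hq0 : 0 ≤ q) (hq1 : q ≤ 1) (hε : 0 ≤ ε) (hd : |p - q| ≤ ε) (hεv : ε ≤ q * (1 - q))
    (hmom : ∀ i (m : ℕ), 2 ≤ m → ∫ ω, (X i ω - q) ^ m ≤ q * (1 - q))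
    (m : Fin n → ℕ) (hm : ∑ i, m i = k) :
    ∫ ω, ∏ i, (X i ω - q) ^ m i ≤ ε + ∏ i, gV (q * (1 - q)) (m i) := by
  classical
  set S : Finset (Fin n) := Finset.univ.filter (fun i => m i ≠ 0) with hS
  have conv : ∀ {β : Type} [CommMonoid β] (φ : Fin n → β), (∀ i, m i = 0 → φ i = 1) →
      ∏ i, φ i = ∏ j : Fin S.card, φ (S.equivFin.symm j) := by
    intro β _ φ hφ
    rw [S.equivFin.symm.prod_comp (fun i : S => φ i), Finset.prod_coe_sort]
    symm
    apply Finset.prod_subset (Finset.subset_univ _)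
    intro i _ hi
    apply hφ
    simpa [hS] using hi
  have hsum : ∑ j : Fin S.card, m (S.equivFin.symm j) = k := by
    rw [S.equivFin.symm.sum_comp (fun i : S => m i), Finset.sum_coe_sort, ← hm]
    apply Finset.sum_subset (Finset.subset_univ _)
    intro i _ hi
    simpa [hS] using hi
  have hpos : ∀ j : Fin S.card, 1 ≤ m (S.equivFin.symm j) := by
    intro j
    have := (S.equivFin.symm j).2
    have h2 := (Finset.mem_filter.1 this).2
    omega
  have hcard : S.card ≤ k := by
    rw [← hsum]
    calc S.card = ∑ _j : Fin S.card, 1 := by simp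
      _ ≤ _ := Finset.sum_le_sum fun j _ => hpos j
  have h := tuple_case X hmeas h01 happrox hp0 hp1 hq hint hq0 hq1 hε hd hεv hmom hcard
    (fun j => (S.equivFin.symm j : Fin n))
    (Subtype.val_injective.comp S.equivFin.symm.injective)
    (fun j => m (S.equivFin.symm j)) hpos (by rw [hsum]; exact hk)
  rw [conv (fun i => gV (q * (1 - q)) (m i)) (fun i hi => by simp [gV, hi])]
  have e : ∀ ω, ∏ i, (X i ω - q) ^ m i = ∏ j : Fin S.card,
      (X (S.equivFin.symm j) ω - q) ^ m (S.equivFin.symm j) := fun ω =>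
    conv (fun i => (X i ω - q) ^ m i) (fun i hi => by simp [hi])
  simp_rw [e]
  exact h

lemma gen_bound {n k : ℕ} {v x : ℝ} (hv : 0 ≤ v) (hx : 0 < x) (hx1 : x ≤ 1) :
    ∑ m ∈ Finset.piAntidiag (Finset.univ : Finset (Fin n)) k,
      (Nat.multinomial Finset.univ m : ℝ) * ∏ i, gV v (m i) ≤
    k.factorial * (x ^ k)⁻¹ * Real.exp (n * v * x ^ 2) := by
  have hg0 : ∀ m, 0 ≤ gV v m := by
    intro m; unfold gV; split_ifs <;> linarith
  have hterm : ∀ m ∈ Finset.piAntidiag (Finset.univ : Finset (Fin n)) k,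
      (Nat.multinomial Finset.univ m : ℝ) * ∏ i, gV v (m i) =
      k.factorial * (x ^ k)⁻¹ * ∏ i, (gV v (m i) * x ^ m i / (m i).factorial) := by
    intro m hm
    have hsum : ∑ i, m i = k := (Finset.mem_piAntidiag.1 hm).1
    have hspec := Nat.multinomial_spec Finset.univ m
    rw [hsum] at hspec
    rw [Finset.prod_div_distrib, Finset.prod_mul_distrib, Finset.prod_pow_eq_pow_sum, hsum,
      ← hspec]
    push_cast
    have : (∏ i, ((m i).factorial : ℝ)) ≠ 0 :=
      Finset.prod_ne_zero_iff.2 fun i _ => by positivity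
    have hxk : x ^ k ≠ 0 := by positivity
    field_simp
  rw [Finset.sum_congr rfl hterm, ← Finset.mul_sum]
  refine mul_le_mul_of_nonneg_left ?_ (by positivity)
  have hF : ∑ j ∈ Finset.range (k+1), gV v j * x ^ j / j.factorial ≤ Real.exp (v * x ^ 2) := by
    have h1 : ∑ j ∈ Finset.range (k+1), gV v j * x ^ j / j.factorial ≤
        ∑ j ∈ Finset.range (k+3), gV v j * x ^ j / j.factorial :=
      Finset.sum_le_sum_of_subset_of_nonneg (by intro a; simp; omega) fun j _ _ =>
        div_nonneg (mul_nonneg (hg0 j) (by positivity)) (by positivity)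
    have h2 : ∑ j ∈ Finset.range (k+3), gV v j * x ^ j / j.factorial =
        1 + v * (∑ j ∈ Finset.range (k+3), x ^ j / j.factorial - 1 - x) := by
      have hsplit : ∀ f : ℕ → ℝ, ∑ j ∈ Finset.range (k+3), f j =
          ∑ j ∈ Finset.range (k+1), f (j+2) + f 1 + f 0 := by
        intro f
        rw [Finset.sum_range_succ', Finset.sum_range_succ']
      rw [hsplit, hsplit]
      simp only [gV, Nat.add_eq_zero_iff, OfNat.ofNat_ne_zero, and_false, if_false,
        Nat.add_eq_right, Nat.reduceEqDiff, mul_div_assoc, ← Finset.mul_sum]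
      simp [add_comm]
    have h3 := Real.sum_le_exp_of_nonneg hx.le (k+3)
    have h4 := Real.exp_bound' hx.le hx1 (n := 2) (by norm_num)
    have h5 : Real.exp x ≤ 1 + x + x ^ 2 := by
      norm_num [Finset.sum_range_succ] at h4
      nlinarith [sq_nonneg x]
    have h6 : v * (∑ j ∈ Finset.range (k+3), x ^ j / j.factorial - 1 - x) ≤ v * x ^ 2 :=
      mul_le_mul_of_nonneg_left (by linarith) hv
    have h7 := Real.add_one_le_exp (v * x ^ 2)
    linarith
  have hsub : Finset.piAntidiag (Finset.univ : Finset (Fin n)) k ⊆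
      Fintype.piFinset (fun _ => Finset.range (k+1)) := by
    intro m hm
    have hsum : ∑ i, m i = k := (Finset.mem_piAntidiag.1 hm).1
    rw [Fintype.mem_piFinset]
    intro i
    have := Finset.single_le_sum (f := m) (fun i _ => Nat.zero_le _) (Finset.mem_univ i)
    rw [Finset.mem_range]
    omega
  calc _ ≤ ∑ m ∈ Fintype.piFinset (fun _ : Fin n => Finset.range (k+1)),
        ∏ i, (gV v (m i) * x ^ m i / (m i).factorial) :=
        Finset.sum_le_sum_of_subset_of_nonneg hsub fun m _ _ => Finset.prod_nonneg fun i _ =>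
          div_nonneg (mul_nonneg (hg0 _) (by positivity)) (by positivity)
    _ = ∏ _i : Fin n, ∑ j ∈ Finset.range (k+1), gV v j * x ^ j / j.factorial := by
        rw [Finset.prod_univ_sum]
    _ ≤ ∏ _i : Fin n, Real.exp (v * x ^ 2) :=
        Finset.prod_le_prod (fun i _ => Finset.sum_nonneg fun j _ =>
          div_nonneg (mul_nonneg (hg0 _) (by positivity)) (by positivity)) fun _ _ => hF
    _ = _ := by
        rw [Finset.prod_const, ← Real.exp_nat_mul]
        simp [mul_assoc]

lemma one_add_inv_pow (m : ℕ) (hm : 2 ≤ m) :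
    5/2 - 1/(2*(m:ℝ)) ≤ (1 + 1/(m:ℝ)) ^ m := by
  have hm0 : (0:ℝ) < m := by exact_mod_cast (by omega : 0 < m)
  have key : ∀ j : ℕ, 1 + j * (1/(m:ℝ)) + j * (j - 1) / 2 * (1/(m:ℝ))^2 ≤ (1 + 1/(m:ℝ)) ^ j := by
    intro j
    induction j with
    | zero => simp
    | succ j ih =>
      have hy : 0 ≤ 1/(m:ℝ) := by positivity
      set y := 1/(m:ℝ)
      have h1 : (1 + j * y + j * (j - 1) / 2 * y^2) * (1 + y) ≤ (1 + y) ^ (j+1) := by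
        rw [pow_succ]; exact mul_le_mul_of_nonneg_right ih (by linarith)
      have h2 : (0:ℝ) ≤ j * (j - 1) / 2 * y ^ 3 := by
        rcases Nat.eq_zero_or_pos j with h | h
        · simp [h]
        · have : (1:ℝ) ≤ j := by exact_mod_cast h
          have : (0:ℝ) ≤ j - 1 := by linarith
          positivity
      push_cast
      nlinarith
  have := key m
  refine le_trans (le_of_eq ?_) this
  field_simp
  ring

lemma fact_bound (m : ℕ) (hm : 2 ≤ m) :
    ((2 * m).factorial : ℝ) * (2 * Real.exp 1) ^ m ≤ 8 * ((2 * m : ℕ) : ℝ) ^ (2 * m) := by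
  have he : Real.exp 1 < 2.7182818286 := Real.exp_one_lt_d9
  have he0 : 0 < Real.exp 1 := Real.exp_pos 1
  induction m, hm using Nat.le_induction with
  | base =>
    norm_num [Nat.factorial]
    nlinarith
  | succ m hm ih =>
    have hm0 : (2:ℝ) ≤ m := by exact_mod_cast hm
    have h1 := one_add_inv_pow m hm
    have hb0 : 0 ≤ 5/2 - 1/(2*(m:ℝ)) := by
      have : 1/(2*(m:ℝ)) ≤ 1 := by rw [div_le_one (by linarith)]; linarith
      linarith
    have h2 : (5/2 - 1/(2*(m:ℝ)))^2 ≤ (1 + 1/(m:ℝ)) ^ (2*m) := by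
      rw [mul_comm 2 m, pow_mul]
      exact pow_le_pow_left₀ hb0 h1 2
    have h3 : (2*m+1) * (2 * Real.exp 1) ≤ (2*m+2) * (5/2 - 1/(2*(m:ℝ)))^2 := by
      have : (5/2 - 1/(2*(m:ℝ)))^2 = (25*m^2 - 10*m + 1)/(4*m^2) := by field_simp; ring
      rw [this, ← mul_div_assoc, le_div_iff₀ (by positivity)]
      have h4 : (2*m+1) * (2 * Real.exp 1) ≤ (2*(m:ℝ)+1) * 5.44 := by
        apply mul_le_mul_of_nonneg_left _ (by positivity)
        linarith
      have h5 : (2*m+1) * (2 * Real.exp 1) * (4*(m:ℝ)^2) ≤ (2*(m:ℝ)+1) * 5.44 * (4*(m:ℝ)^2) :=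
        mul_le_mul_of_nonneg_right h4 (by positivity)
      refine h5.trans ?_
      obtain ⟨y, hy⟩ : ∃ y : ℝ, (m:ℝ) = 2 + y := ⟨m - 2, by ring⟩
      have hy0 : 0 ≤ y := by linarith
      rw [hy]
      have : 0 ≤ y^2 := by positivity
      have : 0 ≤ y^3 := by positivity
      nlinarith
    have h6 : ((2 * (m+1) : ℕ) : ℝ) ^ (2 * m) = ((2*m : ℕ) : ℝ) ^ (2*m) * (1 + 1/(m:ℝ)) ^ (2*m) := by
      rw [← mul_pow]
      congr 1
      push_cast
      field_simp
    have h7 : (2*m+1) * (2 * Real.exp 1) ≤ (2*m+2) * (1 + 1/(m:ℝ)) ^ (2*m) :=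
      h3.trans (mul_le_mul_of_nonneg_left h2 (by positivity))
    have h8 : 2 * (m+1) = 2*m+1+1 := by ring
    have h9 : ((2 * (m+1)).factorial : ℝ) = (2*m+2) * (2*m+1) * (2*m).factorial := by
      rw [h8, Nat.factorial_succ, Nat.factorial_succ]
      push_cast
      ring
    have h10 : ((2 * (m+1) : ℕ) : ℝ) ^ (2 * (m+1)) = (2*m+2)^2 *
        (((2*m : ℕ) : ℝ) ^ (2*m) * (1 + 1/(m:ℝ)) ^ (2*m)) := by
      rw [← h6]
      push_cast
      ring
    rw [h9, h10]
    calc _ = ((2*m).factorial * (2 * Real.exp 1)^m) * ((2*m+2) * ((2*m+1) * (2 * Real.exp 1))) := by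
          ring
      _ ≤ (8 * ((2 * m : ℕ) : ℝ) ^ (2 * m)) * ((2*m+2) * ((2*m+2) * (1 + 1/(m:ℝ)) ^ (2*m))) := by
          gcongr
      _ = _ := by ring

lemma main_bound {n m : ℕ} {v μ : ℝ} (hm : 2 ≤ m) (hv : 0 ≤ v) (hvμ : n * v ≤ μ) :
    ∑ f ∈ Finset.piAntidiag (Finset.univ : Finset (Fin n)) (2 * m),
      (Nat.multinomial Finset.univ f : ℝ) * ∏ i, gV v (f i) ≤
    8 * (((2 * m : ℕ) : ℝ) * μ + ((2 * m : ℕ) : ℝ) ^ 2) ^ m := by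
  have hm0 : (2:ℝ) ≤ m := by exact_mod_cast hm
  have hμ : 0 ≤ μ := le_trans (by positivity) hvμ
  set K : ℝ := ((2 * m : ℕ) : ℝ) with hK
  have hK2 : K = 2 * m := by rw [hK]; push_cast; ring
  have hK0 : 0 < K := by rw [hK2]; linarith
  set y : ℝ := K / (2 * (μ + K)) with hy
  have hy0 : 0 < y := by positivity
  have hy1 : y ≤ 1 := by rw [hy, div_le_one (by positivity)]; linarith
  have hx0 : 0 < Real.sqrt y := Real.sqrt_pos.2 hy0
  have hx1 : Real.sqrt y ≤ 1 := by rw [Real.sqrt_le_iff]; constructor <;> linarith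
  have h := gen_bound (n := n) (k := 2 * m) hv hx0 hx1
  refine h.trans ?_
  rw [pow_mul, Real.sq_sqrt hy0.le]
  have hexp : Real.exp (n * v * y) ≤ Real.exp 1 ^ m := by
    rw [← Real.exp_nat_mul, mul_one]
    apply Real.exp_le_exp.2
    calc n * v * y ≤ μ * y := mul_le_mul_of_nonneg_right hvμ hy0.le
      _ ≤ (μ + K) * y := mul_le_mul_of_nonneg_right (by linarith) hy0.le
      _ = K / 2 := by rw [hy]; field_simp
      _ = m := by rw [hK2]; ring
  have hf := fact_bound m hm
  rw [← hK] at hf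
  have hinv : (y ^ m)⁻¹ = 2 ^ m * ((μ + K) / K) ^ m := by
    rw [← inv_pow, ← mul_pow, hy, inv_div]
    congr 1
    ring
  calc _ ≤ ((2*m).factorial : ℝ) * (y ^ m)⁻¹ * Real.exp 1 ^ m := by gcongr
    _ = (((2*m).factorial : ℝ) * (2 * Real.exp 1) ^ m) * ((μ + K) / K) ^ m := by
        rw [hinv, mul_pow]; ring
    _ ≤ (8 * K ^ (2 * m)) * ((μ + K) / K) ^ m := by gcongr
    _ = _ := by
        rw [pow_mul, mul_assoc, ← mul_pow]
        congr 2
        field_simp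

theorem tail_bound_kwise_eps_approx
    {Ω : Type*} [MeasureSpace Ω] [IsProbabilityMeasure (volume : Measure Ω)]
    (n k : ℕ) (ε p : ℝ) (hn : 1 ≤ n) (hk4 : 4 ≤ k) (hkeven : Even k)
    (hε : 0 ≤ ε) (hp0 : 0 ≤ p) (hp1 : p ≤ 1)
    (X : Fin n → Ω → ℝ) (hmeas : ∀ i, Measurable (X i))
    (h01 : ∀ i ω, X i ω = 0 ∨ X i ω = 1)
    (hident : ∀ i j : Fin n, volume {ω | X i ω = 1} = volume {ω | X j ω = 1})
    (happrox : KWiseApproxIndep n X k ε p)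
    (t : ℝ) (ht : 0 < t) :
    (volume {ω | t ≤ |(∑ i, X i ω) - ∫ ω', (∑ i, X i ω') ∂volume|}).toReal ≤
      8 * (((k : ℝ) * (∫ ω', (∑ i, X i ω') ∂volume) + (k : ℝ) ^ 2) / t ^ 2) ^ (k / 2) +
        ε * ((n : ℝ) / t) ^ k := by
  obtain ⟨m, hm⟩ := hkeven
  have hkm : k = 2 * m := by omega
  have hm2 : 2 ≤ m := by omega
  set i0 : Fin n := ⟨0, by omega⟩
  set q : ℝ := (volume {ω | X i0 ω = 1}).toReal with hqdef
  have hbd : ∀ i ω, 0 ≤ X i ω ∧ X i ω ≤ 1 := by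
    intro i ω
    rcases h01 i ω with h | h <;> rw [h] <;> norm_num
  have hint : ∀ i, Integrable (X i) := fun i =>
    Integrable.of_bound (C := 1) (hmeas i).aestronglyMeasurable
      (Filter.Eventually.of_forall fun ω => by
        rw [Real.norm_eq_abs, abs_of_nonneg (hbd i ω).1]; exact (hbd i ω).2)
  have hq : ∀ i, ∫ ω, X i ω = q := by
    intro i
    have e : ∀ ω, X i ω = Set.indicator {ω | X i ω = 1} (fun _ => (1:ℝ)) ω := by
      intro ω
      rcases h01 i ω with h | h <;> simp [Set.indicator, h]
    have hms : MeasurableSet {ω | X i ω = 1} := hmeas i (measurableSet_singleton 1)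
    rw [integral_congr_ae (Filter.Eventually.of_forall e),
      integral_indicator_const _ hms, hqdef, ← hident i i0]
    simp [Measure.real]
  have hq0 : 0 ≤ q := ENNReal.toReal_nonneg
  have hq1 : q ≤ 1 := by
    have := prob_le_one (μ := (volume : Measure Ω)) (s := {ω | X i0 ω = 1})
    simpa using ENNReal.toReal_mono (by simp) this
  have hd : |p - q| ≤ ε := by
    have h := happrox 1 (by omega) (fun _ => i0) (fun a b _ => Subsingleton.elim a b)
      (fun _ => true)
    simp at h
    rw [abs_sub_comm]
    exact h
  have habs : ∀ i ω, |X i ω - q| ≤ 1 := by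
    intro i ω
    have := hbd i ω
    rw [abs_le]; constructor <;> linarith
  have hintpow : ∀ i (l : ℕ), Integrable (fun ω => (X i ω - q) ^ l) := fun i l =>
    Integrable.of_bound (C := 1) (((hmeas i).sub_const q).pow_const l).aestronglyMeasurable
      (Filter.Eventually.of_forall fun ω => by
        rw [Real.norm_eq_abs, abs_pow]
        exact pow_le_one₀ (abs_nonneg _) (habs i ω))
  have hmom : ∀ i (l : ℕ), 2 ≤ l → ∫ ω, (X i ω - q) ^ l ≤ q * (1 - q) := by
    intro i l hl
    have hI : Integrable (fun ω => X i ω * (1 - 2 * q) + q ^ 2) :=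
      ((hint i).mul_const _).add (integrable_const _)
    calc ∫ ω, (X i ω - q) ^ l ≤ ∫ ω, (X i ω * (1 - 2 * q) + q ^ 2) := by
          refine integral_mono (hintpow i l) hI fun ω => ?_
          calc (X i ω - q) ^ l ≤ |X i ω - q| ^ l := by
                rw [← abs_pow]; exact le_abs_self _
            _ ≤ |X i ω - q| ^ 2 := pow_le_pow_of_le_one (abs_nonneg _) (habs i ω) hl
            _ = X i ω * (1 - 2 * q) + q ^ 2 := by
                rw [sq_abs]
                rcases h01 i ω with h | h <;> rw [h] <;> ring
      _ = q * (1 - q) := by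
          rw [integral_add ((hint i).mul_const _) (integrable_const _), integral_mul_const, hq]
          simp
          ring
  have hμ : ∫ ω', (∑ i, X i ω') = n * q := by
    rw [integral_finsetSum _ fun i _ => hint i]
    simp [hq]
  rw [hμ]
  have hcent : ∀ ω, (∑ i, X i ω) - n * q = ∑ i, (X i ω - q) := by
    intro ω; simp [Finset.sum_sub_distrib]
  have hIk : Integrable (fun ω => (∑ i, (X i ω - q)) ^ k) := by
    refine Integrable.of_bound (C := (n:ℝ) ^ k) ?_ ?_
    · exact ((Finset.measurable_fun_sum _ fun i _ =>
        (hmeas i).sub_const q).pow_const k).aestronglyMeasurable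
    · refine Filter.Eventually.of_forall fun ω => ?_
      rw [Real.norm_eq_abs, abs_pow]
      refine pow_le_pow_left₀ (abs_nonneg _) ?_ k
      refine (Finset.abs_sum_le_sum_abs _ _).trans ?_
      refine (Finset.sum_le_sum fun i _ => habs i ω).trans ?_
      simp
  have hv0 : 0 ≤ q * (1 - q) := mul_nonneg hq0 (by linarith)
  have hmoment : ∫ ω, (∑ i, (X i ω - q)) ^ k ≤
      8 * ((k : ℝ) * (n * q) + (k : ℝ) ^ 2) ^ m + ε * (n : ℝ) ^ k := by
    rcases le_total ε (q * (1 - q)) with hc | hc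
    · have hexp : ∀ ω, (∑ i, (X i ω - q)) ^ k = ∑ f ∈ Finset.piAntidiag Finset.univ k,
          (Nat.multinomial Finset.univ f : ℝ) * ∏ i, (X i ω - q) ^ f i := fun ω =>
        Finset.sum_pow_eq_sum_piAntidiag _ _ _
      have hIf : ∀ f : Fin n → ℕ, Integrable (fun ω => ∏ i, (X i ω - q) ^ f i) := by
        intro f
        refine Integrable.of_bound (C := 1) ?_ ?_
        · exact (Finset.measurable_fun_prod _ fun j _ =>
            ((hmeas j).sub_const q).pow_const _).aestronglyMeasurable
        · refine Filter.Eventually.of_forall fun ω => ?_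
          rw [Real.norm_eq_abs, Finset.abs_prod]
          refine Finset.prod_le_one (fun _ _ => abs_nonneg _) fun j _ => ?_
          rw [abs_pow]
          exact pow_le_one₀ (abs_nonneg _) (habs j ω)
      simp_rw [hexp]
      rw [integral_finsetSum _ fun f _ => (hIf f).const_mul _]
      have hcount : (n:ℝ) ^ k = ∑ f ∈ Finset.piAntidiag (Finset.univ : Finset (Fin n)) k,
          (Nat.multinomial Finset.univ f : ℝ) := by
        have := Finset.sum_pow_eq_sum_piAntidiag (Finset.univ : Finset (Fin n))
          (fun _ => (1:ℝ)) k
        simpa using this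
      have hM := main_bound (n := n) (μ := n * q) hm2 hv0
        (mul_le_mul_of_nonneg_left (by nlinarith) (by positivity))
      rw [← hkm] at hM
      calc _ ≤ ∑ f ∈ Finset.piAntidiag (Finset.univ : Finset (Fin n)) k,
            (Nat.multinomial Finset.univ f : ℝ) * (ε + ∏ i, gV (q * (1 - q)) (f i)) := by
            refine Finset.sum_le_sum fun f hf => ?_
            rw [integral_const_mul]
            refine mul_le_mul_of_nonneg_left ?_ (by positivity)
            exact multi_case (by omega) X hmeas h01 happrox hp0 hp1 hq hint hq0 hq1 hε hd hc hmom
              f (Finset.mem_piAntidiag.1 hf).1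
        _ = ∑ f ∈ Finset.piAntidiag (Finset.univ : Finset (Fin n)) k,
            (Nat.multinomial Finset.univ f : ℝ) * ∏ i, gV (q * (1 - q)) (f i) +
            ε * (n : ℝ) ^ k := by
            rw [hcount, Finset.mul_sum, ← Finset.sum_add_distrib]
            exact Finset.sum_congr rfl fun f _ => by ring
        _ ≤ _ := by linarith
    · have hn0 : (0:ℝ) < n := by exact_mod_cast hn
      obtain ⟨l, hl⟩ : ∃ l, k = l + 1 := ⟨k - 1, by omega⟩
      have hev : Even k := ⟨m, hm⟩
      have hpt : ∀ ω, (∑ i, (X i ω - q)) ^ k ≤ (n:ℝ) ^ l * ∑ i, (X i ω - q) ^ k := by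
        intro ω
        have h1 := pow_sum_div_card_le_sum_pow (s := (Finset.univ : Finset (Fin n)))
          (f := fun i => |X i ω - q|) (fun i _ => abs_nonneg _) l
        rw [← hl, div_le_iff₀ (by simpa using pow_pos hn0 l)] at h1
        simp only [hev.pow_abs, Finset.card_univ, Fintype.card_fin] at h1
        rw [mul_comm]
        refine le_trans ?_ h1
        rw [← hev.pow_abs]
        exact pow_le_pow_left₀ (abs_nonneg _) (Finset.abs_sum_le_sum_abs _ _) k
      have h2 : ∫ ω, (∑ i, (X i ω - q)) ^ k ≤ (n:ℝ) ^ l * (n * ε) := by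
        calc _ ≤ ∫ ω, (n:ℝ) ^ l * ∑ i, (X i ω - q) ^ k :=
              integral_mono hIk ((integrable_finsetSum _ fun i _ => hintpow i k).const_mul _) hpt
          _ = (n:ℝ) ^ l * ∑ i, ∫ ω, (X i ω - q) ^ k := by
              rw [integral_const_mul, integral_finsetSum _ fun i _ => hintpow i k]
          _ ≤ (n:ℝ) ^ l * ∑ _i : Fin n, ε := by
              gcongr with i
              exact (hmom i k (by omega)).trans hc
          _ = _ := by simp
      have h3 : 0 ≤ 8 * ((k : ℝ) * (n * q) + (k : ℝ) ^ 2) ^ m := by positivity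
      have h4 : (n:ℝ) ^ l * (n * ε) = ε * (n:ℝ) ^ k := by rw [hl]; ring
      linarith
  have hev : Even k := ⟨m, hm⟩
  have hmark := mul_meas_ge_le_integral_of_nonneg
    (Filter.Eventually.of_forall fun ω => hev.pow_nonneg (∑ i, (X i ω - q))) hIk (t ^ k)
  have hset : {ω | t ≤ |(∑ i, X i ω) - n * q|} = {ω | t ^ k ≤ (∑ i, (X i ω - q)) ^ k} := by
    ext ω
    simp only [Set.mem_ofPred_eq]
    rw [hcent, ← hev.pow_abs (∑ i, (X i ω - q))]
    exact (pow_le_pow_iff_left₀ ht.le (abs_nonneg _) (by omega)).symm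
  rw [hset]
  have htk : 0 < t ^ k := pow_pos ht k
  have hk2 : k / 2 = m := by omega
  have hfin : 8 * (((k : ℝ) * (n * q) + (k : ℝ) ^ 2) / t ^ 2) ^ (k / 2) + ε * ((n : ℝ) / t) ^ k =
      (8 * ((k : ℝ) * (n * q) + (k : ℝ) ^ 2) ^ m + ε * (n : ℝ) ^ k) / t ^ k := by
    rw [hk2, div_pow, div_pow, ← pow_mul, ← hkm]
    ring
  rw [hfin, le_div_iff₀ htk, mul_comm]
  exact hmark.trans hmoment
end

section
/- Let n and b be integers with (log₂ n)^{10} ≤ b ≤ n. Suppose k := 15·(ln n)/(ln b) is an even integer with k ≥ 4, and set ε = n^{−6} and p = b^{−1/5}. Let S_1,…,S_n be subsets of {1,…,n} with |S_i| = b and i ∈ S_i for every i, and let X_1,…,X_n be {0,1}-valued random variables with identical marginal distributions that are k-wise ε-approximately independent for the product distribution D(n,p). Then each of the following n+1 events holds with probability at least 1 − 9·n^{−3}: for each i ∈ {1,…,n}, the event Σ_{j∈S_i} X_j > 0; and the event Σ_{i=1}^n X_i ≤ 2·n·b^{−1/5}. -/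
open MeasureTheory

lemma aux_point {Ω : Type*} [MeasureSpace Ω] [IsProbabilityMeasure (volume : Measure Ω)]
    {n k : ℕ} {ε p : ℝ} (X : Fin n → Ω → ℝ) (hmeas : ∀ i, Measurable (X i))
    (h01 : ∀ i ω, X i ω = 0 ∨ X i ω = 1) (happrox : KWiseApproxIndep n X k ε p)
    (U A : Finset (Fin n)) (hA : A ⊆ U) (hU : U.card ≤ k) :
    |(∫ ω, (∏ j ∈ A, X j ω) * ∏ j ∈ U \ A, (1 - X j ω)) -
      (∏ _j ∈ A, p) * ∏ _j ∈ U \ A, (1 - p)| ≤ ε := by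
  classical
  let e := U.equivFin.symm
  have h := happrox U.card hU (fun j => (e j : Fin n))
    (fun a b hab => e.injective (Subtype.ext hab)) (fun j => decide ((e j : Fin n) ∈ A))
  have h1 : ∏ j : Fin U.card, (if decide ((e j : Fin n) ∈ A) = true then p else 1 - p)
      = (∏ _j ∈ A, p) * ∏ _j ∈ U \ A, (1 - p) := by
    rw [Equiv.prod_comp e (fun x : U => if decide ((x : Fin n) ∈ A) = true then p else 1 - p)]
    rw [Finset.prod_coe_sort U (fun x => if decide (x ∈ A) = true then p else 1 - p)]
    rw [← Finset.prod_sdiff hA, mul_comm]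
    congr 1
    · exact Finset.prod_congr rfl (fun x hx => by simp [hx])
    · exact Finset.prod_congr rfl (fun x hx => by simp [(Finset.mem_sdiff.1 hx).2])
  have hset : {ω | ∀ j : Fin U.card, X (e j) ω = (if decide ((e j : Fin n) ∈ A) = true then 1 else 0)}
      = {ω | ∀ j ∈ U, X j ω = if j ∈ A then 1 else 0} := by
    ext ω
    simp only [Set.mem_ofPred_eq, decide_eq_true_eq]
    constructor
    · intro H j hj
      have := H (e.symm ⟨j, hj⟩)
      simpa using this
    · intro H j
      exact H _ (e j).2
  have hms : MeasurableSet {ω | ∀ j ∈ U, X j ω = if j ∈ A then (1:ℝ) else 0} := by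
    have : {ω | ∀ j ∈ U, X j ω = if j ∈ A then (1:ℝ) else 0}
        = ⋂ j ∈ U, (X j) ⁻¹' {if j ∈ A then (1:ℝ) else 0} := by
      ext ω; simp
    rw [this]
    exact Finset.measurableSet_biInter _ (fun j _ => hmeas j (measurableSet_singleton _))
  have hIntg : (∫ ω, (∏ j ∈ A, X j ω) * ∏ j ∈ U \ A, (1 - X j ω))
      = (volume {ω | ∀ j ∈ U, X j ω = if j ∈ A then (1:ℝ) else 0}).toReal := by
    have := integral_indicator_one (μ := (volume : Measure Ω)) hms
    rw [← measureReal_def, ← this]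
    congr 1
    funext ω
    by_cases hω : ω ∈ {ω | ∀ j ∈ U, X j ω = if j ∈ A then (1:ℝ) else 0}
    · rw [Set.indicator_of_mem hω]
      rw [Finset.prod_eq_one, Finset.prod_eq_one]
      · simp
      · intro j hj
        have := hω j (Finset.mem_sdiff.1 hj).1
        simp [this, (Finset.mem_sdiff.1 hj).2]
      · intro j hj
        have := hω j (hA hj)
        simp [this, hj]
    · rw [Set.indicator_of_notMem hω]
      simp only [Set.mem_ofPred_eq, not_forall] at hω
      obtain ⟨j, hj, hne⟩ := hω
      by_cases hjA : j ∈ A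
      · rw [Finset.prod_eq_zero hjA, zero_mul]
        rcases h01 j ω with h | h
        · exact h
        · simp [hjA, h] at hne
      · rw [Finset.prod_eq_zero (i := j) (s := U \ A) (Finset.mem_sdiff.2 ⟨hj, hjA⟩), mul_zero]
        rcases h01 j ω with h | h
        · simp [hjA, h] at hne
        · simp [h]
  rw [h1, hset] at h
  rw [hIntg]
  exact h

lemma aux_integrable {Ω : Type*} [MeasureSpace Ω] [IsProbabilityMeasure (volume : Measure Ω)]
    {n : ℕ} (X : Fin n → Ω → ℝ) (hmeas : ∀ i, Measurable (X i))
    (h01 : ∀ i ω, X i ω = 0 ∨ X i ω = 1) (A B : Finset (Fin n)) :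
    Integrable (fun ω => (∏ j ∈ A, X j ω) * ∏ j ∈ B, (1 - X j ω)) := by
  refine Integrable.of_bound (C := 1) ?_ ?_
  · exact ((Finset.measurable_fun_prod _ (fun j _ => hmeas j)).mul
      (Finset.measurable_fun_prod _ (fun j _ => measurable_const.sub (hmeas j)))).aestronglyMeasurable
  · refine Filter.Eventually.of_forall (fun ω => ?_)
    rw [Real.norm_eq_abs, abs_mul, Finset.abs_prod, Finset.abs_prod]
    refine mul_le_one₀ ?_ (Finset.prod_nonneg fun _ _ => abs_nonneg _) ?_
    · exact Finset.prod_le_one (fun _ _ => abs_nonneg _) (fun j _ => by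
        rcases h01 j ω with h | h <;> simp [h])
    · exact Finset.prod_le_one (fun _ _ => abs_nonneg _) (fun j _ => by
        rcases h01 j ω with h | h <;> simp [h])

lemma aux_prod {Ω : Type*} [MeasureSpace Ω] [IsProbabilityMeasure (volume : Measure Ω)]
    {n k : ℕ} {ε p : ℝ} (X : Fin n → Ω → ℝ) (hmeas : ∀ i, Measurable (X i))
    (h01 : ∀ i ω, X i ω = 0 ∨ X i ω = 1) (happrox : KWiseApproxIndep n X k ε p)
    (U : Finset (Fin n)) (hU : U.card ≤ k) (g h : Fin n → ℝ) :
    |(∫ ω, ∏ j ∈ U, (g j * X j ω + h j * (1 - X j ω))) -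
      ∏ j ∈ U, (g j * p + h j * (1 - p))| ≤ ε * ∏ j ∈ U, (|g j| + |h j|) := by
  classical
  have e1 : ∀ ω, ∏ j ∈ U, (g j * X j ω + h j * (1 - X j ω)) =
      ∑ A ∈ U.powerset, ((∏ j ∈ A, g j) * ∏ j ∈ U \ A, h j) *
        ((∏ j ∈ A, X j ω) * ∏ j ∈ U \ A, (1 - X j ω)) := by
    intro ω
    rw [Finset.prod_add]
    refine Finset.sum_congr rfl fun A _ => ?_
    rw [Finset.prod_mul_distrib, Finset.prod_mul_distrib]; ring
  have e2 : ∏ j ∈ U, (g j * p + h j * (1 - p)) =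
      ∑ A ∈ U.powerset, ((∏ j ∈ A, g j) * ∏ j ∈ U \ A, h j) *
        ((∏ _j ∈ A, p) * ∏ _j ∈ U \ A, (1 - p)) := by
    rw [Finset.prod_add]
    refine Finset.sum_congr rfl fun A _ => ?_
    rw [Finset.prod_mul_distrib, Finset.prod_mul_distrib]; ring
  simp_rw [e1]
  rw [e2, integral_finsetSum _ (fun A _ => (aux_integrable X hmeas h01 A (U \ A)).const_mul _),
    ← Finset.sum_sub_distrib, Finset.prod_add, Finset.mul_sum]
  refine (Finset.abs_sum_le_sum_abs _ _).trans (Finset.sum_le_sum fun A hA => ?_)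
  rw [integral_const_mul, ← mul_sub, abs_mul, abs_mul, Finset.abs_prod, Finset.abs_prod, mul_comm]
  exact mul_le_mul_of_nonneg_right
    (aux_point X hmeas h01 happrox U A (Finset.mem_powerset.1 hA) hU)
    (mul_nonneg (Finset.prod_nonneg fun _ _ => abs_nonneg _)
      (Finset.prod_nonneg fun _ _ => abs_nonneg _))

/-- ideal weight of the outcome `A` inside `T` -/
noncomputable def auxW {n : ℕ} (T : Finset (Fin n)) (p : ℝ) (A : Finset (Fin n)) : ℝ :=
  (∏ _j ∈ A, p) * ∏ _j ∈ T \ A, (1 - p)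

lemma aux_ideal {n : ℕ} (T : Finset (Fin n)) (p : ℝ) (g h : Fin n → ℝ) :
    ∑ A ∈ T.powerset, auxW T p A * ∏ j ∈ T, (if j ∈ A then g j else h j) =
      ∏ j ∈ T, (g j * p + h j * (1 - p)) := by
  classical
  rw [Finset.prod_add]
  refine Finset.sum_congr rfl fun A hA => ?_
  rw [← Finset.prod_sdiff (Finset.mem_powerset.1 hA), Finset.prod_mul_distrib,
    Finset.prod_mul_distrib, auxW]
  have a1 : ∏ j ∈ A, (if j ∈ A then g j else h j) = ∏ j ∈ A, g j :=
    Finset.prod_congr rfl (fun x hx => by simp [hx])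
  have a2 : ∏ j ∈ T \ A, (if j ∈ A then g j else h j) = ∏ j ∈ T \ A, h j :=
    Finset.prod_congr rfl (fun x hx => by simp [(Finset.mem_sdiff.1 hx).2])
  rw [a1, a2]; ring

lemma aux_tuple {Ω : Type*} [MeasureSpace Ω] [IsProbabilityMeasure (volume : Measure Ω)]
    {n k : ℕ} {ε p : ℝ} (hε : 0 ≤ ε) (hp0 : 0 ≤ p) (hp1 : p ≤ 1)
    (X : Fin n → Ω → ℝ) (hmeas : ∀ i, Measurable (X i))
    (h01 : ∀ i ω, X i ω = 0 ∨ X i ω = 1) (happrox : KWiseApproxIndep n X k ε p)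
    (T : Finset (Fin n)) (f : Fin k → Fin n) (hf : ∀ l, f l ∈ T) :
    |(∫ ω, ∏ l, (X (f l) ω - p)) -
      ∑ A ∈ T.powerset, auxW T p A * ∏ l, ((if f l ∈ A then 1 else 0) - p)| ≤ ε := by
  classical
  set U := Finset.univ.image f with hUdef
  have hUT : U ⊆ T := by
    intro x hx
    obtain ⟨l, _, rfl⟩ := Finset.mem_image.1 hx
    exact hf l
  have hU : U.card ≤ k := by
    simpa using (Finset.card_image_le (s := (Finset.univ : Finset (Fin k))) (f := f))
  set c : Fin n → ℕ := fun j => (Finset.univ.filter fun l => f l = j).card with hc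
  have hprod : ∀ y : Fin n → ℝ, ∏ l, y (f l) = ∏ j ∈ U, y j ^ c j := fun y =>
    Finset.prod_comp y f
  have hc0 : ∀ j, j ∉ U → c j = 0 := by
    intro j hj
    simp only [hc, Finset.card_eq_zero, Finset.filter_eq_empty_iff]
    intro l _ h
    exact hj (Finset.mem_image.2 ⟨l, Finset.mem_univ _, h⟩)
  have hc1 : ∀ j ∈ U, c j ≠ 0 := by
    intro j hj
    obtain ⟨l, _, h⟩ := Finset.mem_image.1 hj
    exact Finset.card_ne_zero_of_mem (a := l) (by simp [h])
  have hprodT : ∀ y : Fin n → ℝ, ∏ l, y (f l) = ∏ j ∈ T, y j ^ c j := by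
    intro y
    rw [hprod]
    exact Finset.prod_subset hUT (fun j _ hj => by rw [hc0 j hj, pow_zero])
  have e1 : ∀ ω, ∏ l, (X (f l) ω - p) =
      ∏ j ∈ U, ((1 - p) ^ c j * X j ω + (0 - p) ^ c j * (1 - X j ω)) := by
    intro ω
    rw [hprod (fun j => X j ω - p)]
    refine Finset.prod_congr rfl fun j _ => ?_
    rcases h01 j ω with h | h <;> simp [h]
  have e2 : ∑ A ∈ T.powerset, auxW T p A * ∏ l, ((if f l ∈ A then (1:ℝ) else 0) - p) =
      ∏ j ∈ U, ((1 - p) ^ c j * p + (0 - p) ^ c j * (1 - p)) := by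
    rw [Finset.prod_subset hUT (f := fun j => (1 - p) ^ c j * p + (0 - p) ^ c j * (1 - p))
      (fun j _ hj => by simp [hc0 j hj]),
      ← aux_ideal T p (fun j => (1 - p) ^ c j) (fun j => (0 - p) ^ c j)]
    refine Finset.sum_congr rfl fun A _ => ?_
    rw [hprodT (fun j => (if j ∈ A then (1:ℝ) else 0) - p)]
    congr 1
    refine Finset.prod_congr rfl fun j _ => ?_
    split_ifs <;> rfl
  simp_rw [e1]
  rw [e2]
  refine (aux_prod X hmeas h01 happrox U hU _ _).trans ?_
  refine mul_le_of_le_one_right hε (Finset.prod_le_one (fun j _ => by positivity) fun j hj => ?_)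
  rw [abs_pow, abs_pow, zero_sub, abs_neg, abs_of_nonneg hp0, abs_of_nonneg (sub_nonneg.2 hp1)]
  have := pow_le_of_le_one (sub_nonneg.2 hp1) (by linarith) (hc1 j hj)
  have := pow_le_of_le_one hp0 hp1 (hc1 j hj)
  linarith

lemma aux_sum_pow {n : ℕ} (T : Finset (Fin n)) (k : ℕ) (a : Fin n → ℝ) :
    (∑ j ∈ T, a j) ^ k = ∑ f ∈ Fintype.piFinset (fun _ : Fin k => T), ∏ l, a (f l) := by
  classical
  rw [← Finset.prod_univ_sum]
  simp

lemma aux_moment {Ω : Type*} [MeasureSpace Ω] [IsProbabilityMeasure (volume : Measure Ω)]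
    {n k : ℕ} {ε p : ℝ} (hε : 0 ≤ ε) (hp0 : 0 ≤ p) (hp1 : p ≤ 1)
    (X : Fin n → Ω → ℝ) (hmeas : ∀ i, Measurable (X i))
    (h01 : ∀ i ω, X i ω = 0 ∨ X i ω = 1) (happrox : KWiseApproxIndep n X k ε p)
    (T : Finset (Fin n)) :
    (∫ ω, (∑ j ∈ T, (X j ω - p)) ^ k) ≤
      ∑ A ∈ T.powerset, auxW T p A * (∑ j ∈ T, ((if j ∈ A then 1 else 0) - p)) ^ k
        + ε * (T.card : ℝ) ^ k := by
  classical
  have hI : ∀ f : Fin k → Fin n, Integrable (fun ω => ∏ l, (X (f l) ω - p)) := by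
    intro f
    refine Integrable.of_bound (C := 1) ?_ ?_
    · exact (Finset.measurable_fun_prod _
        (fun l _ => (hmeas (f l)).sub measurable_const)).aestronglyMeasurable
    · refine Filter.Eventually.of_forall (fun ω => ?_)
      rw [Real.norm_eq_abs, Finset.abs_prod]
      refine Finset.prod_le_one (fun _ _ => abs_nonneg _) (fun j _ => ?_)
      rw [abs_le]
      rcases h01 (f j) ω with h | h <;> rw [h] <;> constructor <;> linarith
  simp_rw [aux_sum_pow T k (fun j => X j _ - p)]
  have e2 : ∑ A ∈ T.powerset, auxW T p A * (∑ j ∈ T, ((if j ∈ A then (1:ℝ) else 0) - p)) ^ k =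
      ∑ f ∈ Fintype.piFinset (fun _ : Fin k => T), ∑ A ∈ T.powerset,
        auxW T p A * ∏ l, ((if f l ∈ A then 1 else 0) - p) := by
    rw [Finset.sum_comm]
    refine Finset.sum_congr rfl fun A _ => ?_
    rw [aux_sum_pow T k (fun j => (if j ∈ A then (1:ℝ) else 0) - p), Finset.mul_sum]
  have e3 : ε * (T.card : ℝ) ^ k = ∑ _f ∈ Fintype.piFinset (fun _ : Fin k => T), ε := by
    rw [Finset.sum_const, Fintype.card_piFinset]
    simp [mul_comm]
  rw [e2, e3, integral_finsetSum _ (fun f _ => hI f), ← Finset.sum_add_distrib]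
  refine Finset.sum_le_sum fun f hf => ?_
  have := (abs_le.1 (aux_tuple hε hp0 hp1 X hmeas h01 happrox T f
    (fun l => Fintype.mem_piFinset.1 hf l))).2
  linarith

lemma aux_mgf {n : ℕ} (T : Finset (Fin n)) {p : ℝ} (hp0 : 0 ≤ p) (hp1 : p ≤ 1)
    (s : ℝ) (hs : |s| ≤ 1) :
    ∑ A ∈ T.powerset, auxW T p A * Real.exp (s * ∑ j ∈ T, ((if j ∈ A then 1 else 0) - p)) ≤
      Real.exp (s ^ 2 * (T.card * p)) := by
  classical
  have : ∀ A : Finset (Fin n), Real.exp (s * ∑ j ∈ T, ((if j ∈ A then 1 else 0) - p)) =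
      ∏ j ∈ T, (if j ∈ A then Real.exp (s * (1 - p)) else Real.exp (s * (0 - p))) := by
    intro A
    rw [Finset.mul_sum, Real.exp_sum]
    refine Finset.prod_congr rfl fun j _ => ?_
    split_ifs <;> rfl
  simp_rw [this]
  rw [aux_ideal T p (fun _ => Real.exp (s * (1 - p))) (fun _ => Real.exp (s * (0 - p)))]
  rw [Finset.prod_const]
  have h1 : Real.exp (s * (1 - p)) * p + Real.exp (s * (0 - p)) * (1 - p) ≤
      Real.exp (s ^ 2 * p) := by
    have a1 : Real.exp (s * (1 - p)) = Real.exp (-(s * p)) * Real.exp s := by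
      rw [← Real.exp_add]; ring_nf
    have a2 : Real.exp (s * (0 - p)) = Real.exp (-(s * p)) := by ring_nf
    have a3 : Real.exp s ≤ 1 + s + s ^ 2 := by
      have := (abs_le.1 (Real.abs_exp_sub_one_sub_id_le hs)).2
      linarith
    have a4 : 1 + p * (Real.exp s - 1) ≤ Real.exp (p * (s + s ^ 2)) := by
      have := Real.add_one_le_exp (p * (s + s ^ 2))
      nlinarith
    rw [a1, a2]
    calc _ = Real.exp (-(s * p)) * (1 + p * (Real.exp s - 1)) := by ring
      _ ≤ Real.exp (-(s * p)) * Real.exp (p * (s + s ^ 2)) := by gcongr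
      _ = _ := by rw [← Real.exp_add]; ring_nf
  calc _ ≤ (Real.exp (s ^ 2 * p)) ^ T.card := by
        refine pow_le_pow_left₀ ?_ h1 _
        have := Real.exp_pos (s * (1 - p))
        have := Real.exp_pos (s * (0 - p))
        have : 0 ≤ 1 - p := by linarith
        positivity
    _ = _ := by rw [← Real.exp_nat_mul]; ring_nf

lemma aux_ideal_moment {n k : ℕ} (hk : Even k) (T : Finset (Fin n)) {p : ℝ}
    (hp0 : 0 ≤ p) (hp1 : p ≤ 1) (s : ℝ) (hs0 : 0 ≤ s) (hs : s ≤ 1) (hs2 : s ^ 2 * (T.card * p) = 1) :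
    s ^ k * ∑ A ∈ T.powerset, auxW T p A * (∑ j ∈ T, ((if j ∈ A then 1 else 0) - p)) ^ k ≤
      6 * (k.factorial : ℝ) := by
  classical
  have hW : ∀ A, 0 ≤ auxW T p A := by
    intro A
    have : 0 ≤ 1 - p := by linarith
    unfold auxW; positivity
  have hpt : ∀ y : ℝ, s ^ k * y ^ k ≤ k.factorial * (Real.exp (s * y) + Real.exp (-s * y)) := by
    intro y
    have h1 := Real.pow_div_factorial_le_exp |s * y| (abs_nonneg _) k
    rw [hk.pow_abs, div_le_iff₀ (by positivity), mul_pow] at h1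
    have h2 : Real.exp |s * y| ≤ Real.exp (s * y) + Real.exp (-s * y) := by
      rcases abs_cases (s * y) with h | h <;> rw [h.1]
      · linarith [Real.exp_pos (-s * y)]
      · rw [neg_mul]; linarith [Real.exp_pos (s * y)]
    calc _ ≤ _ := h1
      _ = k.factorial * Real.exp |s * y| := by ring
      _ ≤ _ := by gcongr
  have m1 := aux_mgf T hp0 hp1 s (by rwa [abs_of_nonneg hs0])
  have m2 := aux_mgf T hp0 hp1 (-s) (by rwa [abs_neg, abs_of_nonneg hs0])
  rw [neg_sq, hs2] at m2
  rw [hs2] at m1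
  have he := Real.exp_one_lt_d9
  calc _ = ∑ A ∈ T.powerset, auxW T p A * (s ^ k * (∑ j ∈ T, ((if j ∈ A then 1 else 0) - p)) ^ k) := by
        rw [Finset.mul_sum]; exact Finset.sum_congr rfl fun A _ => by ring
    _ ≤ ∑ A ∈ T.powerset, auxW T p A * (k.factorial *
          (Real.exp (s * (∑ j ∈ T, ((if j ∈ A then 1 else 0) - p))) +
            Real.exp (-s * (∑ j ∈ T, ((if j ∈ A then 1 else 0) - p))))) :=
        Finset.sum_le_sum fun A _ => mul_le_mul_of_nonneg_left (hpt _) (hW A)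
    _ = k.factorial * (∑ A ∈ T.powerset, auxW T p A *
          Real.exp (s * (∑ j ∈ T, ((if j ∈ A then 1 else 0) - p))) +
          ∑ A ∈ T.powerset, auxW T p A *
            Real.exp (-s * (∑ j ∈ T, ((if j ∈ A then 1 else 0) - p)))) := by
        rw [← Finset.sum_add_distrib, Finset.mul_sum]
        exact Finset.sum_congr rfl fun A _ => by ring
    _ ≤ k.factorial * 6 := by
        refine mul_le_mul_of_nonneg_left ?_ (by positivity)
        linarith
    _ = _ := by ring

/-- Tail bound in terms of moments. -/
lemma aux_tail {Ω : Type*} [MeasureSpace Ω] [IsProbabilityMeasure (volume : Measure Ω)]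
    {n r : ℕ} {ε p : ℝ} (hε : 0 ≤ ε) (hp0 : 0 < p) (hp1 : p ≤ 1)
    (X : Fin n → Ω → ℝ) (hmeas : ∀ i, Measurable (X i))
    (h01 : ∀ i ω, X i ω = 0 ∨ X i ω = 1) (happrox : KWiseApproxIndep n X (2 * r) ε p)
    (T : Finset (Fin n)) (hT : 1 ≤ (T.card : ℝ) * p) :
    (volume {ω | (T.card * p) ^ (2 * r) ≤ (∑ j ∈ T, (X j ω - p)) ^ (2 * r)}).toReal ≤
      6 * ((2 * r).factorial : ℝ) / (T.card * p) ^ r + ε / p ^ (2 * r) := by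
  have hk : Even (2 * r) := even_two_mul r
  set M : ℝ := T.card * p with hM
  have hMpos : 0 < M := by linarith
  have hIntg : Integrable (fun ω => (∑ j ∈ T, (X j ω - p)) ^ (2 * r)) := by
    refine Integrable.of_bound (C := (T.card : ℝ) ^ (2 * r)) ?_ ?_
    · exact ((Finset.measurable_fun_sum _
        (fun l _ => (hmeas l).sub measurable_const)).pow_const _).aestronglyMeasurable
    · refine Filter.Eventually.of_forall (fun ω => ?_)
      rw [Real.norm_eq_abs, abs_pow]
      refine pow_le_pow_left₀ (abs_nonneg _) ?_ _
      refine (Finset.abs_sum_le_sum_abs _ _).trans ?_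
      have : ∑ j ∈ T, |X j ω - p| ≤ ∑ j ∈ T, (1:ℝ) := Finset.sum_le_sum fun j _ => by
        rw [abs_le]
        rcases h01 j ω with h | h <;> rw [h] <;> constructor <;> linarith
      simpa using this
  have hmk := mul_meas_ge_le_integral_of_nonneg (μ := (volume : Measure Ω))
    (Filter.Eventually.of_forall fun ω => hk.pow_nonneg (∑ j ∈ T, (X j ω - p))) hIntg (M ^ (2 * r))
  have hmom := aux_moment hε hp0.le hp1 X hmeas h01 happrox T
  set s : ℝ := (Real.sqrt M)⁻¹ with hs
  have hsq : s ^ 2 * M = 1 := by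
    rw [hs, inv_pow, Real.sq_sqrt hMpos.le, inv_mul_cancel₀ hMpos.ne']
  have hs1 : s ≤ 1 := inv_le_one_of_one_le₀ (by rwa [Real.one_le_sqrt])
  have hid := aux_ideal_moment hk T hp0.le hp1 s (by positivity) hs1 hsq
  have hsk : s ^ (2 * r) = (M ^ r)⁻¹ := by
    rw [pow_mul, ← inv_pow]; congr 1; exact eq_inv_of_mul_eq_one_left hsq
  rw [hsk, inv_mul_le_iff₀ (by positivity)] at hid
  rw [measureReal_def] at hmk
  have h2 : M ^ (2 * r) = M ^ r * M ^ r := by rw [← pow_add]; ring_nf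
  have h3 : M ^ (2 * r) = (T.card : ℝ) ^ (2 * r) * p ^ (2 * r) := mul_pow _ _ _
  have key := (hmk.trans hmom).trans (add_le_add_left hid _)
  rw [mul_comm, ← le_div_iff₀ (by positivity)] at key
  refine key.trans (le_of_eq ?_)
  have hc : (0:ℝ) < T.card := by
    by_contra hcon
    have : (T.card : ℝ) = 0 := le_antisymm (not_lt.1 hcon) (by positivity)
    rw [hM, this] at hMpos; simp at hMpos
  rw [add_div]
  congr 1
  · rw [h2]; field_simp
  · rw [h3]; field_simp

/-- The numerical facts. -/
lemma aux_num (n b k : ℕ) (hb : (Real.logb 2 n) ^ 10 ≤ (b : ℝ)) (hbn : b ≤ n)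
    (hkval : (k : ℝ) = 15 * Real.log n / Real.log b) (hkeven : Even k) (hk4 : 4 ≤ k) :
    2 ≤ b ∧ (b : ℝ) ^ k = (n : ℝ) ^ 15 ∧ (k : ℝ) ^ 5 ≤ b := by
  have hb2 : 2 ≤ b := by
    by_contra h
    have : b = 0 ∨ b = 1 := by omega
    have hk0 : (k : ℝ) = 0 := by rcases this with h | h <;> simp [hkval, h]
    have : k = 0 := by exact_mod_cast hk0
    omega
  have hbR : (2:ℝ) ≤ b := by exact_mod_cast hb2
  have hnR : (b:ℝ) ≤ n := by exact_mod_cast hbn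
  have hlb : 0 < Real.log b := Real.log_pos (by linarith)
  have hkl : k * Real.log b = 15 * Real.log n := by rw [hkval]; field_simp
  have hpow : (b : ℝ) ^ k = (n : ℝ) ^ 15 := by
    apply Real.log_injOn_pos (Set.mem_Ioi.2 (by positivity)) (Set.mem_Ioi.2 (pow_pos (by linarith) _))
    rw [Real.log_pow, Real.log_pow, hkl]; norm_num
  refine ⟨hb2, hpow, ?_⟩
  have hn3 : 3 ≤ n := by
    by_contra h
    have hn : n = 2 := by omega
    have hb' : b = 2 := by omega
    subst hn hb'
    have : k = 15 := by
      have : (2:ℕ) ^ k = 2 ^ 15 := by exact_mod_cast hpow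
      exact Nat.pow_right_injective (le_refl 2) this
    subst this
    revert hkeven; decide
  have hn3R : (3:ℝ) ≤ n := by exact_mod_cast hn3
  set L := Real.logb 2 n with hL
  have h2L : (2:ℝ) ^ L = n := Real.rpow_logb (by norm_num) (by norm_num) (by linarith)
  have hL1 : 3 / 2 ≤ L := by
    have h : (3:ℝ) ≤ 2 * L := by
      have : 2 * L = Real.logb 2 ((n:ℝ) ^ 2) := by
        rw [Real.logb_pow]; norm_num [hL]
      rw [this, Real.le_logb_iff_rpow_le (by norm_num) (by positivity)]
      norm_num
      nlinarith
    linarith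
  have hL5 : 5 ≤ L := by
    rw [hL, Real.le_logb_iff_rpow_le (by norm_num) (by positivity)]
    have : (3 / 2 : ℝ) ^ 10 ≤ L ^ 10 := pow_le_pow_left₀ (by norm_num) hL1 _
    have h32 : (32:ℝ) ≤ n := by norm_num at this; linarith
    norm_num
    exact_mod_cast h32
  have hbbig : (2:ℝ) ^ 15 ≤ b := by
    have : (5 : ℝ) ^ 10 ≤ L ^ 10 := pow_le_pow_left₀ (by norm_num) hL5 _
    have h5 : (5:ℝ) ^ 10 ≤ b := this.trans hb
    exact le_trans (by norm_num) h5
  have hlb15 : 15 * Real.log 2 ≤ Real.log b := by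
    have := Real.log_le_log (by norm_num) hbbig
    rw [Real.log_pow] at this
    simpa using this
  have hlog2 : 0 < Real.log 2 := Real.log_pos (by norm_num)
  have hkL : (k:ℝ) ≤ L := by
    rw [hL, Real.logb, le_div_iff₀ hlog2]
    have : (0:ℝ) ≤ k := by positivity
    nlinarith
  have hk0 : (0:ℝ) ≤ k := by positivity
  calc (k:ℝ) ^ 5 ≤ L ^ 5 := by gcongr
    _ ≤ L ^ 10 := pow_le_pow_right₀ (by linarith) (by norm_num)
    _ ≤ b := hb

/-- With `(log₂ n)^{10} ≤ b ≤ n`, `k = 15·ln n / ln b` even, `ε = n^{−6}` and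
`p = b^{−1/5}`, each of the `n+1` events (every `S_i` is hit; at most `2·n·b^{−1/5}`
indices selected) holds with probability at least `1 − 9·n^{−3}`. -/
theorem leader_events_concrete_parameters
    {Ω : Type*} [MeasureSpace Ω] [IsProbabilityMeasure (volume : Measure Ω)]
    (n b k : ℕ) (hb : (Real.logb 2 n) ^ 10 ≤ (b : ℝ)) (hbn : b ≤ n)
    (hkval : (k : ℝ) = 15 * Real.log n / Real.log b) (hkeven : Even k) (hk4 : 4 ≤ k)
    (ε p : ℝ) (hε : ε = (n : ℝ) ^ (-6 : ℝ)) (hp : p = (b : ℝ) ^ (-(1/5) : ℝ))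
    (S : Fin n → Finset (Fin n)) (hScard : ∀ i, (S i).card = b) (hSmem : ∀ i, i ∈ S i)
    (X : Fin n → Ω → ℝ) (hmeas : ∀ i, Measurable (X i))
    (h01 : ∀ i ω, X i ω = 0 ∨ X i ω = 1)
    (hident : ∀ i j : Fin n, volume {ω | X i ω = 1} = volume {ω | X j ω = 1})
    (happrox : KWiseApproxIndep n X k ε p) :
    (∀ i : Fin n,
      1 - 9 * (n : ℝ) ^ (-3 : ℝ) ≤ (volume {ω | 0 < ∑ j ∈ S i, X j ω}).toReal) ∧
    1 - 9 * (n : ℝ) ^ (-3 : ℝ) ≤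
      (volume {ω | ∑ i, X i ω ≤ 2 * (n : ℝ) * (b : ℝ) ^ (-(1/5) : ℝ)}).toReal := by
  obtain ⟨hb2, hpow, hk5⟩ := aux_num n b k hb hbn hkval hkeven hk4
  have hbR : (2:ℝ) ≤ b := by exact_mod_cast hb2
  have hnR : (b:ℝ) ≤ n := by exact_mod_cast hbn
  have hb0 : (0:ℝ) < b := by linarith
  have hn0 : (0:ℝ) < n := by linarith
  have hp0 : 0 < p := by rw [hp]; positivity
  have hp1 : p ≤ 1 := by
    rw [hp]; exact Real.rpow_le_one_of_one_le_of_nonpos (by linarith) (by norm_num)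
  have hp5 : p ^ 5 = (b:ℝ)⁻¹ := by
    rw [hp, ← Real.rpow_natCast, ← Real.rpow_mul hb0.le, ← Real.rpow_neg_one]; norm_num
  have hε' : ε = ((n:ℝ) ^ 6)⁻¹ := by
    rw [hε, Real.rpow_neg hn0.le]; norm_cast
  have hn3 : (n:ℝ) ^ (-3:ℝ) = ((n:ℝ) ^ 3)⁻¹ := by
    rw [Real.rpow_neg hn0.le]; norm_cast
  have hε0 : 0 ≤ ε := by rw [hε']; positivity
  have hpk : p ^ k = ((n:ℝ) ^ 3)⁻¹ := by
    apply (pow_left_inj₀ (by positivity) (by positivity) (n := 5) (by norm_num)).1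
    rw [← pow_mul, mul_comm k 5, pow_mul, hp5, inv_pow, hpow, inv_pow, ← pow_mul]
  have hkk : (k:ℝ) ^ k ≤ (n:ℝ) ^ 3 := by
    apply (pow_le_pow_iff_left₀ (by positivity) (by positivity) (n := 5) (by norm_num)).1
    rw [← pow_mul, mul_comm k 5, pow_mul, ← pow_mul (n : ℝ) 3 5, ← hpow]
    gcongr
  have hbp1 : 1 ≤ (b:ℝ) * p := by
    apply (pow_le_pow_iff_left₀ (by positivity) (by positivity) (n := 5) (by norm_num)).1
    rw [mul_pow, hp5, one_pow]
    have : (b:ℝ) ^ 5 * (b:ℝ)⁻¹ = (b:ℝ) ^ 4 := by field_simp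
    rw [this]
    exact one_le_pow₀ (by linarith)
  obtain ⟨r, hr⟩ := hkeven
  have hr2 : k = 2 * r := by omega
  have hbpr : ((b:ℝ) * p) ^ r = (n:ℝ) ^ 6 := by
    apply (pow_left_inj₀ (by positivity) (by positivity) (n := 2) (by norm_num)).1
    rw [← pow_mul, mul_comm r 2, ← hr2, mul_pow, hpow, hpk]
    field_simp
  have hfac : (k.factorial : ℝ) ≤ (n:ℝ) ^ 3 := by
    refine le_trans ?_ hkk
    exact_mod_cast Nat.factorial_le_pow k
  have main : ∀ T : Finset (Fin n), b ≤ T.card →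
      (volume {ω | (T.card * p) ^ k ≤ (∑ j ∈ T, (X j ω - p)) ^ k}).toReal ≤
        9 * (n : ℝ) ^ (-3 : ℝ) := by
    intro T hT
    have hTR : (b:ℝ) ≤ T.card := by exact_mod_cast hT
    have hle : (b:ℝ) * p ≤ T.card * p := by gcongr
    have h := aux_tail (r := r) hε0 hp0 hp1 X hmeas h01 (hr2 ▸ happrox) T (hbp1.trans hle)
    rw [← hr2] at h
    refine h.trans ?_
    have hden : (n:ℝ) ^ 6 ≤ (T.card * p) ^ r := by rw [← hbpr]; gcongr
    have h1 : 6 * (k.factorial : ℝ) / (T.card * p) ^ r ≤ 6 * (n:ℝ) ^ 3 / (n:ℝ) ^ 6 := by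
      gcongr
    have h2 : 6 * (n:ℝ) ^ 3 / (n:ℝ) ^ 6 = 6 * ((n:ℝ) ^ 3)⁻¹ := by field_simp
    have h3 : ε / p ^ k = ((n:ℝ) ^ 3)⁻¹ := by rw [hpk, hε']; field_simp
    have h4 : 0 < ((n:ℝ) ^ 3)⁻¹ := by positivity
    rw [h3, hn3]; linarith
  have compl : ∀ E F : Set Ω, MeasurableSet E → Eᶜ ⊆ F →
      (volume F).toReal ≤ 9 * (n : ℝ) ^ (-3 : ℝ) →
      1 - 9 * (n : ℝ) ^ (-3 : ℝ) ≤ (volume E).toReal := by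
    intro E F hE hEF hF
    have h1 := probReal_compl_eq_one_sub (μ := (volume : Measure Ω)) hE
    have h2 : (volume : Measure Ω).real Eᶜ ≤ (volume : Measure Ω).real F := measureReal_mono hEF
    simp only [measureReal_def] at h1 h2
    linarith
  have hke : Even k := ⟨r, hr⟩
  have hmsum : ∀ T : Finset (Fin n), Measurable (fun ω => ∑ j ∈ T, X j ω) := fun T =>
    Finset.measurable_fun_sum _ (fun j _ => hmeas j)
  refine ⟨fun i => ?_, ?_⟩
  · refine compl _ _ (measurableSet_lt measurable_const (hmsum _)) ?_
      (main (S i) (hScard i).ge)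
    intro ω hω
    simp only [Set.mem_compl_iff, Set.mem_ofPred_eq, not_lt] at hω ⊢
    have h0 : ∑ j ∈ S i, X j ω = 0 := le_antisymm hω (Finset.sum_nonneg fun j _ => by
      rcases h01 j ω with h | h <;> simp [h])
    rw [Finset.sum_sub_distrib, h0, Finset.sum_const, nsmul_eq_mul, zero_sub, hke.neg_pow]
  · refine compl _ _ (measurableSet_le (hmsum _) measurable_const) ?_
      (main Finset.univ (by simpa using hbn))
    intro ω hω
    simp only [Set.mem_compl_iff, Set.mem_ofPred_eq, not_le] at hω ⊢
    rw [← hp] at hω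
    refine pow_le_pow_left₀ (by positivity) ?_ _
    rw [Finset.sum_sub_distrib, Finset.sum_const, nsmul_eq_mul]
    simp only [Finset.card_univ, Fintype.card_fin]
    linarith
end
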